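/- Let $p$ be a prime and let $A \in M_n(\mathbb{Z}_p)$ with $\det A \neq 0$ and with at least one entry of $A$ a $p$-adic unit. Then there exist $V \in GL_n(\mathbb{Z}_p)$, $U \in GL_n(\mathbb{Z})$, and nonnegative integers $r_1 \geq r_2 \geq \cdots \geq r_{n-1} \geq 0$ such that $A = V D U$ where $D = \mathrm{diag}(p^{r_1}, \ldots, p^{r_{n-1}}, 1)$. -/

import Mathlib

/-!
Divide `A` by an entry of minimal valuation and move that entry, now `1`, to the bottom right
corner: `A = [a, b; c, 1]`. By induction the Schur complement is `a - b c = V D U`, with `U` over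
the small ring `S` (here `ℤ`). Clearing `c` by column operations would need coefficients in `R`
(here `ℤ_p`), but `S` surjects onto `R / d` for every diagonal entry `d` of `D`, so
`c = W D U + Z` with `Z` over `S`. The row operations absorb `W`, the column operations absorb `Z`:
`[a, b; c, 1] = [1, b; 0, 1] [V, 0; W, 1] [D, 0; 0, 1] [U, 0; Z, 1]`.
-/

section Equivalence

open Matrix

variable {R S : Type*} [CommRing R] [CommRing S] {φ : S →+* R}
variable {ι κ : Type*} [Fintype ι] [DecidableEq ι]

/-- Equivalence of square matrices over `R` under row operations over `R` and column operations
defined over `S`, that is, the relation `A ∈ GL(R) * B * φ(GL(S))`. -/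
def MixedEquiv (φ : S →+* R) (A B : Matrix ι ι R) : Prop :=
  ∃ (V : Matrix ι ι R) (U : Matrix ι ι S), IsUnit V ∧ IsUnit U ∧ A = V * B * U.map φ

/-- The image of `φ` is dense for the topology on `R` given by the nonzero principal ideals:
`S` surjects onto `R / d` for every `d ≠ 0`. -/
def IsPrincipallyDense (φ : S →+* R) : Prop :=
  ∀ d : R, d ≠ 0 → ∀ x : R, ∃ s : S, d ∣ x - φ s

namespace MixedEquiv

variable {A B C : Matrix ι ι R}

theorem refl (A : Matrix ι ι R) : MixedEquiv φ A A :=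
  ⟨1, 1, isUnit_one, isUnit_one, by simp⟩

theorem trans (hAB : MixedEquiv φ A B) (hBC : MixedEquiv φ B C) : MixedEquiv φ A C := by
  obtain ⟨V, U, hV, hU, rfl⟩ := hAB
  obtain ⟨V', U', hV', hU', rfl⟩ := hBC
  exact ⟨V * V', U' * U, hV.mul hV', hU'.mul hU, by simp only [Matrix.map_mul, Matrix.mul_assoc]⟩

theorem smul (h : MixedEquiv φ A B) (a : R) : MixedEquiv φ (a • A) (a • B) := by
  obtain ⟨V, U, hV, hU, rfl⟩ := h
  exact ⟨V, U, hV, hU, by rw [Matrix.mul_smul, Matrix.smul_mul]⟩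

theorem submatrix [Fintype κ] [DecidableEq κ] (h : MixedEquiv φ A B) (e f σ : κ ≃ ι) :
    MixedEquiv φ (A.submatrix e f) (B.submatrix σ σ) := by
  obtain ⟨V, U, hV, hU, rfl⟩ := h
  refine ⟨V.submatrix e σ, U.submatrix σ f, (isUnit_submatrix_equiv e σ).2 hV,
    (isUnit_submatrix_equiv σ f).2 hU, ?_⟩
  rw [← submatrix_map, submatrix_mul_equiv, submatrix_mul_equiv]

theorem diagonal_of_associated {d d' : ι → R} (h : ∀ i, Associated (d i) (d' i)) :
    MixedEquiv φ (diagonal d) (diagonal d') := by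
  choose u hu using fun i => (h i).symm
  refine ⟨diagonal fun i => u i, 1, ?_, isUnit_one, ?_⟩
  · exact isUnit_diagonal.2 (Pi.isUnit_iff.2 fun i => (u i).isUnit)
  · simp only [map_one, map_zero, Matrix.map_one, Matrix.mul_one, diagonal_mul_diagonal]
    exact congrArg diagonal (funext fun i => by rw [← hu i, mul_comm])

theorem dvd_apply_of_diagonal {d : ι → R} (h : MixedEquiv φ A (diagonal d)) {c : R}
    (hc : ∀ i, c ∣ d i) (i j : ι) : c ∣ A i j := by
  obtain ⟨V, U, -, -, rfl⟩ := h
  rw [Matrix.mul_apply]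
  refine Finset.dvd_sum fun k _ => ?_
  rw [mul_diagonal]
  exact ((hc k).mul_left _).mul_right _

end MixedEquiv

theorem IsPrincipallyDense.exists_eq_mul_diagonal_add_map (hφ : IsPrincipallyDense φ)
    {d : ι → R} (hd : ∀ i, d i ≠ 0) (C : Matrix κ ι R) :
    ∃ (W : Matrix κ ι R) (Z : Matrix κ ι S), C = W * diagonal d + Z.map φ := by
  choose Z W hW using fun i j => hφ (d j) (hd j) (C i j)
  refine ⟨of W, of Z, ?_⟩
  ext i j
  simp only [Matrix.add_apply, mul_diagonal, of_apply, map_apply]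
  rw [mul_comm, ← hW, sub_add_cancel]

theorem IsPrincipallyDense.exists_eq_mul_diagonal_mul_map_add_map (hφ : IsPrincipallyDense φ)
    {d : ι → R} (hd : ∀ i, d i ≠ 0) {U : Matrix ι ι S} (hU : IsUnit U) (C : Matrix κ ι R) :
    ∃ (W : Matrix κ ι R) (Z : Matrix κ ι S), C = W * diagonal d * U.map φ + Z.map φ := by
  obtain ⟨U', -, hU'U⟩ := isUnit_iff_exists.1 hU
  obtain ⟨W, Z, hWZ⟩ := hφ.exists_eq_mul_diagonal_add_map hd (C * U'.map φ)
  refine ⟨W, Z * U, ?_⟩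
  calc C = C * U'.map φ * U.map φ := by
        rw [Matrix.mul_assoc, ← Matrix.map_mul, hU'U]
        simp
    _ = W * diagonal d * U.map φ + (Z * U).map φ := by
        rw [hWZ, Matrix.add_mul, Matrix.map_mul]

theorem MixedEquiv.fromBlocks_one₂₂ [Fintype κ] [DecidableEq κ] (hφ : IsPrincipallyDense φ)
    {d : ι → R} (hd : ∀ i, d i ≠ 0) {a : Matrix ι ι R} {b : Matrix ι κ R} {c : Matrix κ ι R}
    (h : MixedEquiv φ (a - b * c) (diagonal d)) :
    MixedEquiv φ (fromBlocks a b c 1) (diagonal (Sum.elim d 1)) := by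
  obtain ⟨V, U, hV, hU, hVU⟩ := h
  obtain ⟨W, Z, hWZ⟩ := hφ.exists_eq_mul_diagonal_mul_map_add_map hd hU c
  refine ⟨fromBlocks 1 b 0 1 * fromBlocks V 0 W 1, fromBlocks U 0 Z (1 : Matrix κ κ S), ?_, ?_, ?_⟩
  · exact (isUnit_fromBlocks_zero₂₁.2 ⟨isUnit_one, isUnit_one⟩).mul
      (isUnit_fromBlocks_zero₁₂.2 ⟨hV, isUnit_one⟩)
  · exact isUnit_fromBlocks_zero₁₂.2 ⟨hU, isUnit_one⟩
  · have diagonal_blocks : diagonal (Sum.elim d (1 : κ → R)) = fromBlocks (diagonal d) 0 0 1 := by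
      rw [← fromBlocks_diagonal]
      simp
    have schur : fromBlocks V 0 W 1 * diagonal (Sum.elim d 1) *
        (fromBlocks U 0 Z 1).map φ = fromBlocks (a - b * c) 0 c (1 : Matrix κ κ R) := by
      rw [diagonal_blocks, hVU, hWZ, fromBlocks_map]
      simp [fromBlocks_multiply]
    rw [Matrix.mul_assoc, Matrix.mul_assoc, ← Matrix.mul_assoc (fromBlocks V 0 W 1), schur]
    simp [fromBlocks_multiply]

theorem det_submatrix_equiv_ne_zero [Fintype κ] [DecidableEq κ] {A : Matrix ι ι R}
    (hA : A.det ≠ 0) (e f : κ ≃ ι) : (A.submatrix e f).det ≠ 0 := by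
  have factor : A.submatrix e f = (A.submatrix id (e.symm.trans f)).submatrix e e := by
    ext; simp
  rw [factor, det_submatrix_equiv_self, det_permute']
  rcases Int.units_eq_one_or (Equiv.Perm.sign (e.symm.trans f)) with h | h <;> simp [h, hA]

theorem exists_sum_unit_equiv_apply_inr {n : ℕ} (k : Fin (n + 1)) :
    ∃ e : Fin n ⊕ Unit ≃ Fin (n + 1), e (Sum.inr ()) = k :=
  ⟨(Equiv.optionEquivSumPUnit (Fin n)).symm.trans (finSuccEquiv' k).symm, by simp⟩

end Equivalence

section ValuationRing

open Matrix

variable {R S : Type*} [CommRing R] [IsDomain R] [ValuationRing R] [CommRing S] {φ : S →+* R}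

theorem exists_forall_apply_dvd {ι : Type*} [Finite ι] [Nonempty ι] (f : ι → R) :
    ∃ i, ∀ j, f i ∣ f j := by
  have directed : Directed (fun a b : R => b ∣ a) f := fun i j =>
    (ValuationRing.dvd_total (f i) (f j)).elim
      (fun h => ⟨i, dvd_rfl, h⟩) (fun h => ⟨j, h, dvd_rfl⟩)
  have : IsTrans R fun a b : R => b ∣ a := ⟨fun _ _ _ hab hbc => hbc.trans hab⟩
  exact directed.finite_le id

theorem exists_eq_smul_apply_eq_one {m n : Type*} [Finite m] [Finite n] {A : Matrix m n R}
    (hA : A ≠ 0) : ∃ (a : R) (B : Matrix m n R) (i : m) (j : n), A = a • B ∧ B i j = 1 := by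
  obtain ⟨i', j', -⟩ : ∃ i j, A i j ≠ 0 := by
    by_contra! h
    exact hA (Matrix.ext h)
  have : Nonempty (m × n) := ⟨(i', j')⟩
  obtain ⟨⟨i, j⟩, hdvd⟩ := exists_forall_apply_dvd fun x : m × n => A x.1 x.2
  choose B hB using fun k l => hdvd (k, l)
  have pivot_ne_zero : A i j ≠ 0 := fun h => hA (by ext k l; simp [hB k l, h])
  exact ⟨A i j, of B, i, j, Matrix.ext hB, mul_left_cancel₀ pivot_ne_zero (by simp [← hB])⟩

theorem exists_mixedEquiv_diagonal (hφ : IsPrincipallyDense φ) {n : ℕ}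
    (A : Matrix (Fin n) (Fin n) R) (hA : A.det ≠ 0) :
    ∃ d : Fin n → R, (∀ i, d i ≠ 0) ∧ MixedEquiv φ A (diagonal d) := by
  induction n with
  | zero => exact ⟨0, fun i => i.elim0, Subsingleton.elim A (diagonal 0) ▸ MixedEquiv.refl A⟩
  | succ n ih =>
    have A_ne_zero : A ≠ 0 := fun h => hA (by simp [h])
    obtain ⟨a, B, i, j, rfl, hBij⟩ := exists_eq_smul_apply_eq_one A_ne_zero
    have a_ne_zero : a ≠ 0 := fun h => A_ne_zero (by simp [h])
    have detB_ne_zero : B.det ≠ 0 := right_ne_zero_of_mul (det_smul B a ▸ hA)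
    obtain ⟨e, he⟩ := exists_sum_unit_equiv_apply_inr i
    obtain ⟨f, hf⟩ := exists_sum_unit_equiv_apply_inr j
    set M := B.submatrix e f with hM
    have M_blocks : M = fromBlocks M.toBlocks₁₁ M.toBlocks₁₂ M.toBlocks₂₁ 1 := by
      have corner : M.toBlocks₂₂ = 1 := by
        ext
        simp [toBlocks₂₂, hM, he, hf, hBij]
      rw [← corner, fromBlocks_toBlocks]
    have schur_ne_zero : (M.toBlocks₁₁ - M.toBlocks₁₂ * M.toBlocks₂₁).det ≠ 0 := by
      rw [← det_fromBlocks_one₂₂, ← M_blocks]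
      exact det_submatrix_equiv_ne_zero detB_ne_zero e f
    obtain ⟨d, hd, hSchur⟩ := ih _ schur_ne_zero
    have hMd : MixedEquiv φ M (diagonal (Sum.elim d 1)) :=
      M_blocks ▸ MixedEquiv.fromBlocks_one₂₂ hφ hd hSchur
    have hBd := hMd.submatrix e.symm f.symm e.symm
    rw [hM, submatrix_submatrix, e.self_comp_symm, f.self_comp_symm, submatrix_id_id,
      submatrix_diagonal_equiv] at hBd
    refine ⟨a • (Sum.elim d 1 ∘ e.symm), fun k => mul_ne_zero a_ne_zero ?_, ?_⟩
    · rcases h : e.symm k with l | l <;> simp [h, hd]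
    · rw [diagonal_smul]
      exact hBd.smul a

end ValuationRing

section DiscreteValuationRing

open Matrix

variable {R S : Type*} [CommRing R] [IsDomain R] [IsDiscreteValuationRing R] [CommRing S]
  {φ : S →+* R} {ϖ : R}

theorem isPrincipallyDense_of_forall_pow (hϖ : Irreducible ϖ)
    (h : ∀ (k : ℕ) (x : R), ∃ s : S, ϖ ^ k ∣ x - φ s) : IsPrincipallyDense φ := by
  intro d hd x
  obtain ⟨k, hk⟩ := IsDiscreteValuationRing.associated_pow_irreducible hd hϖ
  obtain ⟨s, hs⟩ := h k x
  exact ⟨s, hk.dvd.trans hs⟩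

theorem exists_antitone_mixedEquiv_diagonal_pow (hϖ : Irreducible ϖ) (hφ : IsPrincipallyDense φ)
    {n : ℕ} (A : Matrix (Fin n) (Fin n) R) (hA : A.det ≠ 0) :
    ∃ r : Fin n → ℕ, Antitone r ∧ MixedEquiv φ A (diagonal fun i => ϖ ^ r i) := by
  obtain ⟨d, hd, hAd⟩ := exists_mixedEquiv_diagonal hφ A hA
  choose r hr using fun i => IsDiscreteValuationRing.associated_pow_irreducible (hd i) hϖ
  let σ : Equiv.Perm (Fin n) := Fin.revPerm.trans (Tuple.sort r)
  have hσ : Antitone (r ∘ σ) := fun i j hij => Tuple.monotone_sort r (Fin.rev_le_rev.2 hij)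
  have sorted := (hAd.trans (MixedEquiv.diagonal_of_associated hr)).submatrix
    (Equiv.refl _) (Equiv.refl _) σ
  rw [submatrix_diagonal_equiv] at sorted
  exact ⟨r ∘ σ, hσ, sorted⟩

theorem stmt_13_general (hϖ : Irreducible ϖ) (hφ : IsPrincipallyDense φ) {n : ℕ}
    (A : Matrix (Fin (n + 1)) (Fin (n + 1)) R) (hA : A.det ≠ 0)
    (hunit : ∃ i j, IsUnit (A i j)) :
    ∃ (V : Matrix (Fin (n + 1)) (Fin (n + 1)) R) (U : Matrix (Fin (n + 1)) (Fin (n + 1)) S)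
      (r : Fin (n + 1) → ℕ),
      IsUnit V.det ∧ IsUnit U.det ∧ Antitone r ∧ r (Fin.last n) = 0 ∧
      A = V * diagonal (fun i => ϖ ^ r i) * U.map φ := by
  obtain ⟨r, hr, hAr⟩ := exists_antitone_mixedEquiv_diagonal_pow hϖ hφ A hA
  have last_eq_zero : r (Fin.last n) = 0 := by
    by_contra hlast
    have uniformizer_dvd (k : Fin (n + 1)) : ϖ ∣ ϖ ^ r k :=
      (dvd_pow_self ϖ hlast).trans (pow_dvd_pow ϖ (hr k.le_last))
    obtain ⟨i, j, hij⟩ := hunit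
    exact hϖ.not_isUnit (isUnit_of_dvd_unit (hAr.dvd_apply_of_diagonal uniformizer_dvd i j) hij)
  obtain ⟨V, U, hV, hU, hVU⟩ := hAr
  exact ⟨V, U, r, (isUnit_iff_isUnit_det V).1 hV, (isUnit_iff_isUnit_det U).1 hU, hr,
    last_eq_zero, hVU⟩

end DiscreteValuationRing

theorem isPrincipallyDense_intCast_padicInt (p : ℕ) [Fact p.Prime] :
    IsPrincipallyDense (Int.castRingHom ℤ_[p]) :=
  isPrincipallyDense_of_forall_pow PadicInt.irreducible_p fun k x =>
    ⟨x.appr k, by simpa using Ideal.mem_span_singleton.1 (PadicInt.appr_spec k x)⟩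

/-- Mixed local-global Smith normal form: if `A ∈ M_n(ℤ_p)` has nonzero determinant and
some entry of `A` is a `p`-adic unit, then `A = V D U` with `V ∈ GL_n(ℤ_p)`,
`U ∈ GL_n(ℤ)` and `D = diag(p^{r_1}, …, p^{r_{n-1}}, 1)` with `r_1 ≥ … ≥ r_{n-1} ≥ 0`. -/
theorem stmt_13 (p : ℕ) [Fact p.Prime] (n : ℕ) (hn : 0 < n)
    (A : Matrix (Fin n) (Fin n) ℤ_[p]) (hA : A.det ≠ 0) (hunit : ∃ i j, IsUnit (A i j)) :
    ∃ (V : Matrix (Fin n) (Fin n) ℤ_[p]) (U : Matrix (Fin n) (Fin n) ℤ) (r : Fin n → ℕ),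
      IsUnit V.det ∧ IsUnit U.det ∧ Antitone r ∧ r ⟨n - 1, by omega⟩ = 0 ∧
      A = V * Matrix.diagonal (fun i => (p : ℤ_[p]) ^ r i)
            * U.map (fun x : ℤ => (x : ℤ_[p])) := by
  obtain ⟨m, rfl⟩ := Nat.exists_eq_succ_of_ne_zero hn.ne'
  exact stmt_13_general PadicInt.irreducible_p (isPrincipallyDense_intCast_padicInt p) A hA hunit
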